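/- arXiv:1308.3788 — 11 statements merged into one kernel-verified Lean document; each statement's English description precedes it below -/
import Mathlib

section
/- Let n ≥ 2 be an integer and let a_1, …, a_n be real numbers satisfying ∑_{i=1}^n a_i = 0 and ∑_{i=1}^n a_i² = 𝒜. Then |∑_{i=1}^n a_i³| ≤ ((n−2)/√(n(n−1))) · 𝒜^{3/2}. -/
/-!
A centred family `f` of `n` numbers with `∑ f i ^ 2 = n * (n - 1) * u ^ 2`, `u ≥ 0`, has all its
entries at most `(n - 1) * u`, by Cauchy–Schwarz applied to the other `n - 1` entries. Hence
`∑ (f i - (n - 1) * u) * (f i + u) ^ 2 ≤ 0`, and expanding gives the upper bound on `∑ f i ^ 3`; the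
lower bound is the same for `-f`. The cubic vanishes exactly on the values of the extremal family
`((n - 1) * u, -u, …, -u)`.
-/

open Finset

section CommRing

variable {ι R : Type*} [CommRing R]

theorem sum_sub_mul_add_sq (s : Finset ι) (f : ι → R) (u v : R) :
    ∑ i ∈ s, (f i - v) * (f i + u) ^ 2 =
      ∑ i ∈ s, f i ^ 3 + (2 * u - v) * ∑ i ∈ s, f i ^ 2 + (u ^ 2 - 2 * u * v) * ∑ i ∈ s, f i
        - #s * (v * u ^ 2) := by
  rw [← nsmul_eq_mul, ← sum_const, mul_sum, mul_sum, ← sum_add_distrib, ← sum_add_distrib,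
    ← sum_sub_distrib]
  exact sum_congr rfl fun i _ => by ring

variable [LinearOrder R] [IsStrictOrderedRing R] {s : Finset ι} {f : ι → R} {u : R}

theorem card_mul_sq_le_of_sum_eq_zero (hsum : ∑ j ∈ s, f j = 0) {i : ι} (hi : i ∈ s) :
    #s * f i ^ 2 ≤ (#s - 1) * ∑ j ∈ s, f j ^ 2 := by
  classical
  have hrest : ∑ j ∈ s.erase i, f j = -f i := by
    rw [sum_erase_eq_sub hi, hsum, zero_sub]
  have cauchy_schwarz : f i ^ 2 ≤ (#s - 1) * (∑ j ∈ s, f j ^ 2 - f i ^ 2) := by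
    simpa only [hrest, neg_sq, cast_card_erase_of_mem hi, sum_erase_eq_sub hi] using
      sq_sum_le_card_mul_sum_sq (s := s.erase i) (f := f)
  linarith

theorem le_card_sub_one_mul_of_sum_eq_zero (hu : 0 ≤ u) (hsum : ∑ j ∈ s, f j = 0)
    (hsq : ∑ j ∈ s, f j ^ 2 = #s * (#s - 1) * u ^ 2) {i : ι} (hi : i ∈ s) :
    f i ≤ (#s - 1) * u := by
  have hcard : (1 : R) ≤ #s := mod_cast card_pos.mpr ⟨i, hi⟩
  have hsq_le : f i ^ 2 ≤ ((#s - 1) * u) ^ 2 := by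
    refine le_of_mul_le_mul_left ?_ (zero_lt_one.trans_le hcard)
    calc #s * f i ^ 2
        ≤ (#s - 1) * ∑ j ∈ s, f j ^ 2 := card_mul_sq_le_of_sum_eq_zero hsum hi
      _ = #s * ((#s - 1) * u) ^ 2 := by rw [hsq]; ring
  exact le_of_sq_le_sq hsq_le (mul_nonneg (sub_nonneg.mpr hcard) hu)

theorem sum_pow_three_le_of_sum_eq_zero (hu : 0 ≤ u) (hsum : ∑ i ∈ s, f i = 0)
    (hsq : ∑ i ∈ s, f i ^ 2 = #s * (#s - 1) * u ^ 2) :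
    ∑ i ∈ s, f i ^ 3 ≤ (#s - 2) * u * ∑ i ∈ s, f i ^ 2 := by
  have hnonpos : ∑ i ∈ s, (f i - (#s - 1) * u) * (f i + u) ^ 2 ≤ 0 :=
    sum_nonpos fun i hi => mul_nonpos_of_nonpos_of_nonneg
      (sub_nonpos.mpr (le_card_sub_one_mul_of_sum_eq_zero hu hsum hsq hi)) (sq_nonneg _)
  rw [sum_sub_mul_add_sq, hsum, hsq] at hnonpos
  rw [hsq]
  linarith

theorem abs_sum_pow_three_le_of_sum_eq_zero (hu : 0 ≤ u) (hsum : ∑ i ∈ s, f i = 0)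
    (hsq : ∑ i ∈ s, f i ^ 2 = #s * (#s - 1) * u ^ 2) :
    |∑ i ∈ s, f i ^ 3| ≤ (#s - 2) * u * ∑ i ∈ s, f i ^ 2 := by
  have hneg : ∑ i ∈ s, (-f i) ^ 3 ≤ (#s - 2) * u * ∑ i ∈ s, (-f i) ^ 2 :=
    sum_pow_three_le_of_sum_eq_zero hu (by rw [sum_neg_distrib, hsum, neg_zero])
      (by simpa only [neg_sq] using hsq)
  simp only [neg_sq, Odd.neg_pow (by decide : Odd 3), sum_neg_distrib] at hneg
  exact abs_le'.mpr ⟨sum_pow_three_le_of_sum_eq_zero hu hsum hsq, hneg⟩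

end CommRing

theorem sum_cubes_bound_general {ι : Type*} (s : Finset ι) (hs : 2 ≤ #s) (f : ι → ℝ) (A : ℝ)
    (hsum : ∑ i ∈ s, f i = 0) (hsq : ∑ i ∈ s, f i ^ 2 = A) :
    |∑ i ∈ s, f i ^ 3| ≤ ((#s : ℝ) - 2) / √(#s * (#s - 1)) * A ^ ((3 : ℝ) / 2) := by
  have hcard : (2 : ℝ) ≤ #s := mod_cast hs
  have hpos : (0 : ℝ) < #s * (#s - 1) := mul_pos (by linarith) (by linarith)
  have hA : 0 ≤ A := hsq ▸ sum_nonneg fun i _ => sq_nonneg (f i)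
  have hscale : A = #s * (#s - 1) * (√A / √(#s * (#s - 1))) ^ 2 := by
    rw [div_pow, Real.sq_sqrt hA, Real.sq_sqrt hpos.le, mul_div_cancel₀ _ hpos.ne']
  have hrpow : A ^ ((3 : ℝ) / 2) = √A * A := by
    rw [Real.rpow_div_two_eq_sqrt 3 hA, Real.rpow_ofNat, pow_succ', Real.sq_sqrt hA]
  calc |∑ i ∈ s, f i ^ 3|
      ≤ (#s - 2) * (√A / √(#s * (#s - 1))) * ∑ i ∈ s, f i ^ 2 :=
        abs_sum_pow_three_le_of_sum_eq_zero
          (div_nonneg (Real.sqrt_nonneg _) (Real.sqrt_nonneg _)) hsum (hsq.trans hscale)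
    _ = (#s - 2) / √(#s * (#s - 1)) * A ^ ((3 : ℝ) / 2) := by rw [hsq, hrpow]; ring

theorem sum_cubes_bound (n : ℕ) (hn : 2 ≤ n) (a : Fin n → ℝ) (A : ℝ)
    (hsum : ∑ i, a i = 0) (hsq : ∑ i, (a i) ^ 2 = A) :
    |∑ i, (a i) ^ 3| ≤ ((n : ℝ) - 2) / Real.sqrt (n * (n - 1)) * A ^ ((3 : ℝ) / 2) := by
  simpa only [card_fin] using sum_cubes_bound_general univ (by rwa [card_fin]) a A hsum hsq
end

section
/- For every real number t with 2 ≤ t ≤ (1+√17)/2, one has 17·(t − 2 − 0.16)·(6t − 5.04) ≤ 10.56·(4t − 2 − 3√(−2t² + 2t + 8)). -/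
/-!
The tangent line to the square root at `1` gives `√q ≤ (q + 1) / 2` for the radicand
`q = -2 * t ^ 2 + 2 * t + 8`. Substituting it reduces the claim to the nonpositivity of a convex
quadratic in `t`, which only has to be tested at the endpoints of `[2, 2.57]`. This interval
contains the range of `t`, as `(1 + √17) / 2 < 2.57`.
-/

lemma sq_le_self_add_iff_le_root {c t : ℝ} (ht : 1 / 2 < t) :
    t ^ 2 ≤ t + c ↔ t ≤ (1 + √(1 + 4 * c)) / 2 := by
  calc t ^ 2 ≤ t + c
    _ ↔ (2 * t - 1) ^ 2 ≤ 1 + 4 * c := by constructor <;> intro h <;> linarith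
    _ ↔ 2 * t - 1 ≤ √(1 + 4 * c) := (Real.le_sqrt' (by linarith)).symm
    _ ↔ t ≤ (1 + √(1 + 4 * c)) / 2 := by constructor <;> intro h <;> linarith

lemma convexOn_quadratic {𝕜 : Type*} [Field 𝕜] [LinearOrder 𝕜] [IsStrictOrderedRing 𝕜]
    {a : 𝕜} (ha : 0 ≤ a) (b c : 𝕜) :
    ConvexOn 𝕜 Set.univ fun t : 𝕜 ↦ a * t ^ 2 + b * t + c := by
  have hsq : ConvexOn 𝕜 Set.univ fun t : 𝕜 ↦ a * t ^ 2 := even_two.convexOn_pow.smul ha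
  have hlin : ConvexOn 𝕜 Set.univ fun t : 𝕜 ↦ b * t :=
    (LinearMap.mulLeft 𝕜 b).convexOn convex_univ
  exact (hsq.add hlin).add_const c

lemma quadratic_nonpos_of_mem_Icc {𝕜 : Type*} [Field 𝕜] [LinearOrder 𝕜] [IsStrictOrderedRing 𝕜]
    {a b c x y t : 𝕜} (ha : 0 ≤ a) (hx : a * x ^ 2 + b * x + c ≤ 0)
    (hy : a * y ^ 2 + b * y + c ≤ 0) (ht : t ∈ Set.Icc x y) :
    a * t ^ 2 + b * t + c ≤ 0 :=
  ((convexOn_quadratic ha b c).le_max_of_mem_Icc (Set.mem_univ x) (Set.mem_univ y) ht).trans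
    (max_le hx hy)

theorem h4_nonpos (t : ℝ) (ht1 : 2 ≤ t) (ht2 : t ≤ (1 + Real.sqrt 17) / 2) :
    17 * (t - 2 - 0.16) * (6 * t - 5.04) ≤
      10.56 * (4 * t - 2 - 3 * Real.sqrt (-2 * t ^ 2 + 2 * t + 8)) := by
  have hsq : t ^ 2 ≤ t + 4 := (sq_le_self_add_iff_le_root (by linarith)).2 (by norm_num [ht2])
  have htangent : √(-2 * t ^ 2 + 2 * t + 8) ≤ 1 + (-2 * t ^ 2 + 2 * t + 7) / 2 := by
    rw [show -2 * t ^ 2 + 2 * t + 8 = 1 + (-2 * t ^ 2 + 2 * t + 7) by ring]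
    exact Real.sqrt_one_add_le (by linarith)
  have hrange : t ∈ Set.Icc 2 2.57 := by
    have h17 : √17 ≤ 4.14 := Real.sqrt_le_iff.2 (by norm_num)
    exact ⟨ht1, by linarith⟩
  have hquadratic : 70.32 * t ^ 2 + -316.56 * t + 348.7488 ≤ 0 :=
    quadratic_nonpos_of_mem_Icc (by norm_num) (by norm_num) (by norm_num) hrange
  calc 17 * (t - 2 - 0.16) * (6 * t - 5.04)
    _ ≤ 10.56 * (4 * t - 2 - 3 * (1 + (-2 * t ^ 2 + 2 * t + 7) / 2)) := by linarith
    _ ≤ 10.56 * (4 * t - 2 - 3 * √(-2 * t ^ 2 + 2 * t + 8)) := by gcongr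
end

section
/- For every real number t with 2 ≤ t ≤ (1+√17)/2, one has 17·(t − 2 − 0.23)·(9t − 8.39) ≤ 11.68·(4t − 2 − 3√(−2t² + 2t + 8)). -/
/-!
By AM-GM, `√x` lies below its tangent line at `x = 9/16`. Substituting this line for the square
root turns the difference of the two sides into a concave quadratic in `t`, which is therefore
nonnegative on `[2, 41/16]` as soon as it is nonnegative at both endpoints; and
`(1 + √17) / 2 < 41/16`. There is little freedom in the tangency point: taken below about `0.55`,
the bound fails at `t = 2`, and taken above about `0.61`, it fails at the right endpoint.
-/

theorem sqrt_le_add_sq_div_two_mul {x c : ℝ} (hx : 0 ≤ x) (hc : 0 < c) :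
    √x ≤ (x + c ^ 2) / (2 * c) := by
  rw [le_div_iff₀ (by positivity)]
  calc √x * (2 * c) = 2 * √x * c := by ring
    _ ≤ √x ^ 2 + c ^ 2 := two_mul_le_add_sq _ _
    _ = x + c ^ 2 := by rw [Real.sq_sqrt hx]

theorem concaveOn_quadratic {𝕜 : Type*} [Field 𝕜] [LinearOrder 𝕜] [IsStrictOrderedRing 𝕜]
    {a : 𝕜} (ha : a ≤ 0) (b c : 𝕜) :
    ConcaveOn 𝕜 Set.univ fun x ↦ a * x ^ 2 + b * x + c := by
  have hsq : ConcaveOn 𝕜 Set.univ fun x : 𝕜 ↦ a * x ^ 2 := by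
    simpa [Pi.neg_def] using (even_two.convexOn_pow.smul (neg_nonneg.2 ha)).neg
  have hlin : ConcaveOn 𝕜 Set.univ fun x : 𝕜 ↦ b * x :=
    (LinearMap.mulLeft 𝕜 b).concaveOn convex_univ
  exact (hsq.add hlin).add_const c

theorem quadratic_nonneg_of_mem_Icc {𝕜 : Type*} [Field 𝕜] [LinearOrder 𝕜]
    [IsStrictOrderedRing 𝕜] {a b c u v t : 𝕜} (ha : a ≤ 0) (hu : 0 ≤ a * u ^ 2 + b * u + c)
    (hv : 0 ≤ a * v ^ 2 + b * v + c) (ht : t ∈ Set.Icc u v) :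
    0 ≤ a * t ^ 2 + b * t + c :=
  (le_min hu hv).trans <|
    (concaveOn_quadratic ha b c).min_le_of_mem_Icc (Set.mem_univ u) (Set.mem_univ v) ht

theorem neg_two_mul_sq_add_two_mul_add_eight_nonneg {t : ℝ} (ht : |2 * t - 1| ≤ √17) :
    0 ≤ -2 * t ^ 2 + 2 * t + 8 := by
  have hsq : (2 * t - 1) ^ 2 ≤ 17 := (Real.sq_le (by norm_num)).2 (abs_le.1 ht)
  linarith

theorem h5_tangent_nonpos {t : ℝ} (ht : t ∈ Set.Icc 2 (41 / 16)) :
    17 * (t - 2 - 0.23) * (9 * t - 8.39) ≤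
      11.68 * (4 * t - 2 -
        3 * ((-2 * t ^ 2 + 2 * t + 8 + (3 / 4) ^ 2) / (2 * (3 / 4)))) := by
  have hdiff : 0 ≤ -106.28 * t ^ 2 + 483.82 * t + -541.4449 :=
    quadratic_nonneg_of_mem_Icc (by norm_num) (by norm_num) (by norm_num) ht
  linear_combination hdiff

theorem h5_nonpos (t : ℝ) (ht1 : 2 ≤ t) (ht2 : t ≤ (1 + Real.sqrt 17) / 2) :
    17 * (t - 2 - 0.23) * (9 * t - 8.39) ≤
      11.68 * (4 * t - 2 - 3 * Real.sqrt (-2 * t ^ 2 + 2 * t + 8)) := by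
  have h_sqrt17 : √17 ≤ 33 / 8 := Real.sqrt_le_iff.2 (by norm_num)
  have h_radicand : 0 ≤ -2 * t ^ 2 + 2 * t + 8 :=
    neg_two_mul_sq_add_two_mul_add_eight_nonneg <|
      abs_le.2 ⟨by linarith [Real.sqrt_nonneg 17], by linarith⟩
  calc 17 * (t - 2 - 0.23) * (9 * t - 8.39)
      ≤ 11.68 * (4 * t - 2 -
          3 * ((-2 * t ^ 2 + 2 * t + 8 + (3 / 4) ^ 2) / (2 * (3 / 4)))) :=
        h5_tangent_nonpos ⟨ht1, by linarith⟩
    _ ≤ 11.68 * (4 * t - 2 - 3 * √(-2 * t ^ 2 + 2 * t + 8)) := by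
        gcongr
        exact sqrt_le_add_sq_div_two_mul h_radicand (by norm_num)
end

section
/- Let n ≥ 1 be an integer and let a_{ij}, b_i (1 ≤ i, j ≤ n) be real numbers satisfying ∑_i b_i = 0, ∑_i b_i² = 𝓑 with 𝓑 > 0, and ∑_{i,j} (b_i + b_j) a_{ij} = 𝓒. Then ∑_i a_{ii}² + 3 ∑_{i ≠ j} a_{ij}² ≥ 3𝓒² / (2(n+4)𝓑). -/
/-! By Cauchy–Schwarz with weight `1` on the diagonal and `3` off it, `𝓒²` is at most the left-hand
side times `∑ i, (2 * bᵢ) ^ 2 + (∑ i ≠ j, (bᵢ + bⱼ) ^ 2) / 3`. Expanding the squares, this factor is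
`2 * ((n + 4) * ∑ i, bᵢ ^ 2 + (∑ i, bᵢ) ^ 2) / 3`. -/

section Sums

variable {ι : Type*} [Fintype ι]

lemma sum_sum_ite_eq_diag_add_offDiag {M : Type*} [AddCommMonoid M] [DecidableEq ι]
    (f g : ι → ι → M) :
    ∑ i, ∑ j, (if j = i then f i j else g i j) = ∑ i, f i i + ∑ i, ∑ j with j ≠ i, g i j := by
  simp only [Finset.sum_ite, Finset.filter_eq', Finset.mem_univ, if_true, Finset.sum_singleton,
    Finset.sum_add_distrib]

lemma sum_sum_eq_diag_add_offDiag {M : Type*} [AddCommMonoid M] [DecidableEq ι]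
    (f : ι → ι → M) :
    ∑ i, ∑ j, f i j = ∑ i, f i i + ∑ i, ∑ j with j ≠ i, f i j := by
  simpa only [ite_self] using sum_sum_ite_eq_diag_add_offDiag f f

lemma sum_sum_add_sq {R : Type*} [CommSemiring R] (b : ι → R) :
    ∑ i, ∑ j, (b i + b j) ^ 2 = 2 * (Fintype.card ι * ∑ i, b i ^ 2 + (∑ i, b i) ^ 2) := by
  simp only [add_sq, Finset.sum_add_distrib, ← Finset.mul_sum, ← Finset.sum_mul,
    Finset.sum_const, Finset.card_univ, nsmul_eq_mul]
  ring

end Sums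

section CauchySchwarz

variable {ι K : Type*} [Field K] [LinearOrder K] [IsStrictOrderedRing K]

lemma sq_sum_mul_le_sum_sq_div_mul_sum_mul_sq (s : Finset ι) {w : ι → K}
    (hw : ∀ i ∈ s, 0 < w i) (f g : ι → K) :
    (∑ i ∈ s, f i * g i) ^ 2 ≤ (∑ i ∈ s, f i ^ 2 / w i) * ∑ i ∈ s, w i * g i ^ 2 := by
  refine Finset.sum_sq_le_sum_mul_sum_of_sq_le_mul s
    (fun i hi => div_nonneg (sq_nonneg _) (hw i hi).le)
    (fun i hi => mul_nonneg (hw i hi).le (sq_nonneg _)) fun i hi => le_of_eq ?_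
  have := (hw i hi).ne'
  field_simp

variable [Fintype ι] [DecidableEq ι]

lemma sq_sum_sum_mul_le_diag_add_offDiag {p q : K} (hp : 0 < p) (hq : 0 < q) (f g : ι → ι → K) :
    (∑ i, ∑ j, f i j * g i j) ^ 2 ≤
      ((∑ i, f i i ^ 2) / p + (∑ i, ∑ j with j ≠ i, f i j ^ 2) / q) *
        (p * ∑ i, g i i ^ 2 + q * ∑ i, ∑ j with j ≠ i, g i j ^ 2) := by
  have weight_pos : ∀ x ∈ (Finset.univ : Finset (ι × ι)), 0 < if x.2 = x.1 then p else q :=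
    fun x _ => by split_ifs <;> assumption
  have h := sq_sum_mul_le_sum_sq_div_mul_sum_mul_sq Finset.univ weight_pos
    (fun x => f x.1 x.2) (fun x => g x.1 x.2)
  simpa only [Fintype.sum_prod_type, div_ite, ite_mul, sum_sum_ite_eq_diag_add_offDiag,
    ← Finset.mul_sum, ← Finset.sum_div] using h

theorem lagrange_min_general (a : ι → ι → K) (b : ι → K) :
    3 * (∑ i, ∑ j, (b i + b j) * a i j) ^ 2 ≤
      2 * ((Fintype.card ι + 4) * ∑ i, b i ^ 2 + (∑ i, b i) ^ 2) *
        (∑ i, a i i ^ 2 + 3 * ∑ i, ∑ j with j ≠ i, a i j ^ 2) := by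
  have cauchy_schwarz := sq_sum_sum_mul_le_diag_add_offDiag one_pos three_pos
    (fun i j => b i + b j) a
  have diag : ∑ i, (b i + b i) ^ 2 = 4 * ∑ i, b i ^ 2 := by
    rw [Finset.mul_sum]
    exact Finset.sum_congr rfl fun i _ => by ring
  have off_diag : ∑ i, ∑ j with j ≠ i, (b i + b j) ^ 2 =
      2 * (Fintype.card ι * ∑ i, b i ^ 2 + (∑ i, b i) ^ 2) - 4 * ∑ i, b i ^ 2 := by
    rw [← sum_sum_add_sq, sum_sum_eq_diag_add_offDiag, diag, add_sub_cancel_left]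
  rw [diag, off_diag] at cauchy_schwarz
  linear_combination 3 * cauchy_schwarz

end CauchySchwarz

theorem lagrange_min (n : ℕ) (hn : 1 ≤ n) (a : Fin n → Fin n → ℝ) (b : Fin n → ℝ)
    (B C : ℝ) (hb : ∑ i, b i = 0) (hB : ∑ i, (b i) ^ 2 = B) (hBpos : 0 < B)
    (hC : ∑ i, ∑ j, (b i + b j) * a i j = C) :
    ∑ i, (a i i) ^ 2 + 3 * ∑ i, ∑ j ∈ Finset.univ.filter (fun j => j ≠ i), (a i j) ^ 2 ≥
      3 * C ^ 2 / (2 * (n + 4) * B) := by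
  rw [ge_iff_le, div_le_iff₀' (by positivity)]
  simpa [hb, hB, hC, mul_assoc] using lagrange_min_general a b
end

section
/- Let n ≥ 1 be an integer, let λ_1, …, λ_n be real numbers, and let (h_{ijk})_{1 ≤ i,j,k ≤ n} be real numbers that are symmetric under all permutations of the indices i, j, k. Set S = ∑_i λ_i², A = ∑_{i,j,k} h_{ijk}² λ_i², and B = ∑_{i,j,k} h_{ijk}² λ_i λ_j. Then 3(A − 2B) ≤ σ S ∑_{i,j,k} h_{ijk}², where σ = (√17 + 1)/2. -/
/-!
The weight `w i j k = h i j k ^ 2` is cyclically symmetric, so averaging over the cyclic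
permutations of the indices gives `3 * (A - 2 * B) = ∑ w i j k * q (l i) (l j) (l k)`, where
`q a b c = a ^ 2 + b ^ 2 + c ^ 2 - 2 * (a * b + b * c + c * a)`. It remains to bound
`q (l i) (l j) (l k)` by `s * S`. Since `q a b c = 2 * (a ^ 2 + b ^ 2 + c ^ 2) - (a + b + c) ^ 2`,
distinct indices need only `2 ≤ s`. The extremal case is that of exactly two equal indices, where
`q a a c = c ^ 2 - 4 * a * c`: the form `s * a ^ 2 + 4 * a * c + (s - 1) * c ^ 2` has to be positive
semidefinite, that is, `4 ≤ s * (s - 1)`, with equality at `s = (√17 + 1) / 2`.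
-/

section CyclicSymmetry

variable {ι R : Type*} [Fintype ι] [CommSemiring R] {w : ι → ι → ι → R}

theorem sum_mul_rotate (hw : ∀ i j k, w i j k = w j k i) (f : ι → ι → ι → R) :
    ∑ i, ∑ j, ∑ k, w i j k * f j k i = ∑ i, ∑ j, ∑ k, w i j k * f i j k := by
  calc
    _ = ∑ i, ∑ j, ∑ k, w j k i * f j k i := by
      refine Finset.sum_congr rfl fun i _ ↦ Finset.sum_congr rfl fun j _ ↦
        Finset.sum_congr rfl fun k _ ↦ ?_
      rw [hw i j k]
    _ = ∑ i, ∑ j, ∑ k, w i j k * f i j k := Finset.sum_comm_cycle.symm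

theorem three_mul_sum_mul_eq_sum_mul_rotations (hw : ∀ i j k, w i j k = w j k i)
    (f : ι → ι → ι → R) :
    3 * ∑ i, ∑ j, ∑ k, w i j k * f i j k =
      ∑ i, ∑ j, ∑ k, w i j k * (f i j k + f j k i + f k i j) := by
  simp only [mul_add, Finset.sum_add_distrib, sum_mul_rotate hw fun i j k ↦ f j k i,
    sum_mul_rotate hw f]
  ring

end CyclicSymmetry

section QuadraticBounds

variable {ι R : Type*} [CommRing R] [LinearOrder R] [IsStrictOrderedRing R] {s : R}

theorem two_le_of_four_le_mul_sub_one (hs₀ : 0 ≤ s) (hs : 4 ≤ s * (s - 1)) : 2 ≤ s := by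
  by_contra! hlt
  nlinarith

theorem sq_sub_four_mul_le (hs₀ : 0 ≤ s) (hs : 4 ≤ s * (s - 1)) (a c : R) :
    c ^ 2 - 4 * a * c ≤ s * (a ^ 2 + c ^ 2) := by
  have hs_pos : 0 < s := two_pos.trans_le (two_le_of_four_le_mul_sub_one hs₀ hs)
  have completed_square : s * (s * (a ^ 2 + c ^ 2) - (c ^ 2 - 4 * a * c)) =
      (s * a + 2 * c) ^ 2 + (s * (s - 1) - 4) * c ^ 2 := by ring
  have mul_nonneg_sub : 0 ≤ s * (s * (a ^ 2 + c ^ 2) - (c ^ 2 - 4 * a * c)) := by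
    rw [completed_square]
    exact add_nonneg (sq_nonneg _) (mul_nonneg (sub_nonneg.2 hs) (sq_nonneg c))
  exact sub_nonneg.1 (nonneg_of_mul_nonneg_right mul_nonneg_sub hs_pos)

variable [Fintype ι]

theorem sq_sub_four_mul_le_mul_sum_sq (hs₀ : 0 ≤ s) (hs : 4 ≤ s * (s - 1)) (l : ι → R)
    (i k : ι) : l k ^ 2 - 4 * l i * l k ≤ s * ∑ m, l m ^ 2 := by
  classical
  rcases eq_or_ne i k with rfl | hik
  · have hsum : 0 ≤ s * ∑ m, l m ^ 2 :=
      mul_nonneg hs₀ (Finset.sum_nonneg fun m _ ↦ sq_nonneg (l m))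
    linarith [sq_nonneg (l i)]
  · calc
      l k ^ 2 - 4 * l i * l k ≤ s * (l i ^ 2 + l k ^ 2) := sq_sub_four_mul_le hs₀ hs _ _
      _ = s * ∑ m ∈ {i, k}, l m ^ 2 := by rw [Finset.sum_pair hik]
      _ ≤ s * ∑ m, l m ^ 2 := mul_le_mul_of_nonneg_left
        (Finset.sum_le_univ_sum_of_nonneg fun m ↦ sq_nonneg (l m)) hs₀

theorem sum_sq_sub_two_mul_sum_mul_le_of_ne (l : ι → R) {i j k : ι} (hij : i ≠ j) (hik : i ≠ k)
    (hjk : j ≠ k) :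
    l i ^ 2 + l j ^ 2 + l k ^ 2 - 2 * (l i * l j + l j * l k + l k * l i) ≤
      2 * ∑ m, l m ^ 2 := by
  classical
  calc
    _ = 2 * (l i ^ 2 + (l j ^ 2 + l k ^ 2)) - (l i + l j + l k) ^ 2 := by ring
    _ ≤ 2 * (l i ^ 2 + (l j ^ 2 + l k ^ 2)) := sub_le_self _ (sq_nonneg _)
    _ = 2 * ∑ m ∈ {i, j, k}, l m ^ 2 := by
      rw [Finset.sum_insert (by simp [hij, hik]), Finset.sum_pair hjk]
    _ ≤ 2 * ∑ m, l m ^ 2 := mul_le_mul_of_nonneg_left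
      (Finset.sum_le_univ_sum_of_nonneg fun m ↦ sq_nonneg (l m)) zero_le_two

theorem sum_sq_sub_two_mul_sum_mul_le (hs₀ : 0 ≤ s) (hs : 4 ≤ s * (s - 1)) (l : ι → R)
    (i j k : ι) :
    l i ^ 2 + l j ^ 2 + l k ^ 2 - 2 * (l i * l j + l j * l k + l k * l i) ≤
      s * ∑ m, l m ^ 2 := by
  have repeated := sq_sub_four_mul_le_mul_sum_sq hs₀ hs l
  rcases eq_or_ne i j with rfl | hij
  · linarith [repeated i k]
  rcases eq_or_ne i k with rfl | hik
  · linarith [repeated i j]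
  rcases eq_or_ne j k with rfl | hjk
  · linarith [repeated j i]
  exact (sum_sq_sub_two_mul_sum_mul_le_of_ne l hij hik hjk).trans <|
    mul_le_mul_of_nonneg_right (two_le_of_four_le_mul_sub_one hs₀ hs)
      (Finset.sum_nonneg fun m _ ↦ sq_nonneg (l m))

theorem A_sub_2B_bound_general (hs₀ : 0 ≤ s) (hs : 4 ≤ s * (s - 1)) (l : ι → R)
    (w : ι → ι → ι → R) (hw₀ : ∀ i j k, 0 ≤ w i j k) (hw : ∀ i j k, w i j k = w j k i) :
    3 * (∑ i, ∑ j, ∑ k, w i j k * l i ^ 2 - 2 * ∑ i, ∑ j, ∑ k, w i j k * l i * l j) ≤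
      s * (∑ i, l i ^ 2) * ∑ i, ∑ j, ∑ k, w i j k := by
  calc
    _ = 3 * ∑ i, ∑ j, ∑ k, w i j k * (l i ^ 2 - 2 * (l i * l j)) := by
      simp only [mul_sub, Finset.sum_sub_distrib, Finset.mul_sum, mul_left_comm, mul_assoc]
    _ = ∑ i, ∑ j, ∑ k, w i j k * (l i ^ 2 - 2 * (l i * l j) + (l j ^ 2 - 2 * (l j * l k)) +
          (l k ^ 2 - 2 * (l k * l i))) :=
      three_mul_sum_mul_eq_sum_mul_rotations hw fun i j _ ↦ l i ^ 2 - 2 * (l i * l j)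
    _ ≤ ∑ i, ∑ j, ∑ k, w i j k * (s * ∑ m, l m ^ 2) := by
      gcongr with i _ j _ k _
      · exact hw₀ i j k
      · linarith [sum_sq_sub_two_mul_sum_mul_le hs₀ hs l i j k]
    _ = s * (∑ i, l i ^ 2) * ∑ i, ∑ j, ∑ k, w i j k := by
      simp only [← Finset.sum_mul]
      ring

end QuadraticBounds

theorem four_le_sqrt_seventeen_mul_sub_one :
    4 ≤ (Real.sqrt 17 + 1) / 2 * ((Real.sqrt 17 + 1) / 2 - 1) := by
  have hsq : Real.sqrt 17 ^ 2 = 17 := Real.sq_sqrt (by norm_num)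
  linarith

theorem A_sub_2B_bound (n : ℕ) (hn : 1 ≤ n) (l : Fin n → ℝ) (h : Fin n → Fin n → Fin n → ℝ)
    (hsymm : ∀ i j k, h i j k = h j i k ∧ h i j k = h i k j)
    (S A B : ℝ) (hS : S = ∑ i, (l i) ^ 2)
    (hA : A = ∑ i, ∑ j, ∑ k, (h i j k) ^ 2 * (l i) ^ 2)
    (hB : B = ∑ i, ∑ j, ∑ k, (h i j k) ^ 2 * l i * l j) :
    3 * (A - 2 * B) ≤ (Real.sqrt 17 + 1) / 2 * S * ∑ i, ∑ j, ∑ k, (h i j k) ^ 2 := by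
  subst hS hA hB
  exact A_sub_2B_bound_general (by positivity) four_le_sqrt_seventeen_mul_sub_one l
    (fun i j k ↦ h i j k ^ 2) (fun i j k ↦ sq_nonneg (h i j k))
    fun i j k ↦ congrArg (· ^ 2) ((hsymm i j k).1.trans (hsymm j i k).2)
end

section
/- Let n ≥ 1 be an integer and let (h_{ijkl})_{1 ≤ i,j,k,l ≤ n} be real numbers that are symmetric under all permutations of the first three indices i, j, k (i.e. h_{ijkl} = h_{jikl} = h_{ikjl} for all indices). Define u_{ijkl} = (h_{ijkl} + h_{lijk} + h_{klij} + h_{jkli})/4. Then ∑_{i,j,k,l} (h_{ijkl}² − u_{ijkl}²) ≥ (3/4) ∑_{i,j} (h_{ijij} − h_{jiji})², where the first sum ranges over all ordered quadruples (i,j,k,l) and the second over all ordered pairs (i,j). -/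
/-! The sum of `h ^ 2 - u ^ 2` over all quadruples is the sum of the variances of `h` along the
cyclic orbits, because averaging over cyclic shifts does not change a sum over quadruples. These
variances are nonnegative, so we may keep only the quadruples of the shapes `ijij`, `iijj`, `ijji`.
On each of them `h` takes the values `h i j i j` and `h j i j i` equally often along the orbit,
so the variance is `(h i j i j - h j i j i) ^ 2 / 4`. -/

section SumQuadruples

variable {ι M : Type*} [Fintype ι] [AddCommMonoid M]

theorem sum_cyclic_shift (f : ι → ι → ι → ι → M) :
    ∑ i, ∑ j, ∑ k, ∑ l, f l i j k = ∑ i, ∑ j, ∑ k, ∑ l, f i j k l :=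
  calc ∑ i, ∑ j, ∑ k, ∑ l, f l i j k
    _ = ∑ i, ∑ j, ∑ l, ∑ k, f l i j k :=
      Finset.sum_congr rfl fun _ _ => Finset.sum_congr rfl fun _ _ => Finset.sum_comm
    _ = ∑ i, ∑ l, ∑ j, ∑ k, f l i j k := Finset.sum_congr rfl fun _ _ => Finset.sum_comm
    _ = ∑ l, ∑ i, ∑ j, ∑ k, f l i j k := Finset.sum_comm

variable [PartialOrder M] [IsOrderedAddMonoid M]

theorem sum_diagonal_le_sum {g : ι → ι → M} (hg : ∀ k l, 0 ≤ g k l) :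
    ∑ k, g k k ≤ ∑ k, ∑ l, g k l :=
  Finset.sum_le_sum fun k _ => Finset.single_le_sum (fun l _ => hg k l) (Finset.mem_univ k)

theorem add_swap_le_sum {g : ι → ι → M} (hg : ∀ k l, 0 ≤ g k l) {i j : ι} (hij : i ≠ j) :
    g i j + g j i ≤ ∑ k, ∑ l, g k l :=
  calc g i j + g j i
    _ ≤ ∑ l, g i l + ∑ l, g j l :=
      add_le_add (Finset.single_le_sum (fun l _ => hg i l) (Finset.mem_univ j))
        (Finset.single_le_sum (fun l _ => hg j l) (Finset.mem_univ i))
    _ ≤ ∑ k, ∑ l, g k l :=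
      Finset.add_le_sum (fun k _ => Finset.sum_nonneg fun l _ => hg k l)
        (Finset.mem_univ i) (Finset.mem_univ j) hij

theorem sum_pairings_le_sum {f : ι → ι → ι → ι → M} (hf : ∀ i j k l, 0 ≤ f i j k l)
    (hdiag : ∀ i, f i i i i = 0) :
    ∑ i, ∑ j, (f i j i j + f i j j i + f i i j j) ≤ ∑ i, ∑ j, ∑ k, ∑ l, f i j k l := by
  classical
  have pairings_le (i j : ι) :
      f i j i j + f i j j i + (if i = j then ∑ k, f i i k k else 0) ≤ ∑ k, ∑ l, f i j k l := by
    obtain rfl | hij := eq_or_ne i j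
    · simpa [hdiag] using sum_diagonal_le_sum (hf i i)
    · simpa [hij] using add_swap_le_sum (hf i j) hij
  calc ∑ i, ∑ j, (f i j i j + f i j j i + f i i j j)
    _ = ∑ i, ∑ j, (f i j i j + f i j j i + (if i = j then ∑ k, f i i k k else 0)) := by
      simp [Finset.sum_add_distrib]
    _ ≤ ∑ i, ∑ j, ∑ k, ∑ l, f i j k l :=
      Finset.sum_le_sum fun i _ => Finset.sum_le_sum fun j _ => pairings_le i j

end SumQuadruples

section CyclicMean

variable {ι K : Type*} [Field K]

/-- The average of a four-index tensor over the cyclic shifts of its indices: the symmetrized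
tensor `u` of the paper. -/
def cyclicMean (h : ι → ι → ι → ι → K) (i j k l : ι) : K :=
  (h i j k l + h l i j k + h k l i j + h j k l i) / 4

/-- The variance of a four-index tensor along the cyclic orbit of a quadruple of indices, in the
form "mean of the squares minus square of the mean". The four shifts have equal weight, even when
some of them coincide. -/
def cyclicVariance (h : ι → ι → ι → ι → K) (i j k l : ι) : K :=
  cyclicMean (h ^ 2) i j k l - cyclicMean h i j k l ^ 2

theorem cyclicVariance_shift (h : ι → ι → ι → ι → K) (i j k l : ι) :
    cyclicVariance h l i j k = cyclicVariance h i j k l := by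
  simp only [cyclicVariance, cyclicMean]
  ring

section CharZero

variable [CharZero K]

theorem sum_cyclicMean [Fintype ι] (h : ι → ι → ι → ι → K) :
    ∑ i, ∑ j, ∑ k, ∑ l, cyclicMean h i j k l = ∑ i, ∑ j, ∑ k, ∑ l, h i j k l := by
  have shift_once := sum_cyclic_shift h
  have shift_twice := sum_cyclic_shift fun i j k l => h l i j k
  have shift_thrice := sum_cyclic_shift fun i j k l => h k l i j
  simp only [cyclicMean, ← Finset.sum_div, Finset.sum_add_distrib]
  rw [shift_thrice, shift_twice, shift_once]
  ring

theorem sum_sq_sub_sq_cyclicMean [Fintype ι] (h : ι → ι → ι → ι → K) :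
    ∑ i, ∑ j, ∑ k, ∑ l, (h i j k l ^ 2 - cyclicMean h i j k l ^ 2) =
      ∑ i, ∑ j, ∑ k, ∑ l, cyclicVariance h i j k l := by
  simp only [cyclicVariance, Finset.sum_sub_distrib, sum_cyclicMean, Pi.pow_apply]

theorem cyclicVariance_alternating (h : ι → ι → ι → ι → K) (i j : ι) :
    cyclicVariance h i j i j = (h i j i j - h j i j i) ^ 2 / 4 := by
  simp only [cyclicVariance, cyclicMean, Pi.pow_apply]
  ring

theorem cyclicVariance_adjacent {h : ι → ι → ι → ι → K}
    (h_adjacent : ∀ i j, h i i j j = h i j i j) (h_nested : ∀ i j, h i j j i = h j i j i)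
    (i j : ι) :
    cyclicVariance h i i j j = (h i j i j - h j i j i) ^ 2 / 4 := by
  simp only [cyclicVariance, cyclicMean, Pi.pow_apply, h_adjacent i j, h_adjacent j i,
    h_nested i j, h_nested j i]
  ring

theorem cyclicVariance_nested {h : ι → ι → ι → ι → K}
    (h_adjacent : ∀ i j, h i i j j = h i j i j) (h_nested : ∀ i j, h i j j i = h j i j i)
    (i j : ι) :
    cyclicVariance h i j j i = (h i j i j - h j i j i) ^ 2 / 4 := by
  rw [← cyclicVariance_shift, cyclicVariance_adjacent h_adjacent h_nested]

end CharZero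

variable [LinearOrder K] [IsStrictOrderedRing K]

theorem cyclicVariance_nonneg (h : ι → ι → ι → ι → K) (i j k l : ι) :
    0 ≤ cyclicVariance h i j k l := by
  set m := cyclicMean h i j k l with hm
  have eq_mean_sq_deviation : cyclicVariance h i j k l =
      ((h i j k l - m) ^ 2 + (h l i j k - m) ^ 2 + (h k l i j - m) ^ 2 +
        (h j k l i - m) ^ 2) / 4 := by
    simp only [hm, cyclicVariance, cyclicMean, Pi.pow_apply]
    ring
  rw [eq_mean_sq_deviation]
  positivity

theorem symmetrization_ineq_general [Fintype ι] {h : ι → ι → ι → ι → K}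
    (h_adjacent : ∀ i j, h i i j j = h i j i j) (h_nested : ∀ i j, h i j j i = h j i j i) :
    3 / 4 * ∑ i, ∑ j, (h i j i j - h j i j i) ^ 2 ≤
      ∑ i, ∑ j, ∑ k, ∑ l, (h i j k l ^ 2 - cyclicMean h i j k l ^ 2) := by
  have variance_diag (i : ι) : cyclicVariance h i i i i = 0 := by
    simp [cyclicVariance_alternating]
  calc 3 / 4 * ∑ i, ∑ j, (h i j i j - h j i j i) ^ 2
    _ = ∑ i, ∑ j, (cyclicVariance h i j i j + cyclicVariance h i j j i +
          cyclicVariance h i i j j) := by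
      simp only [cyclicVariance_alternating, cyclicVariance_nested h_adjacent h_nested,
        cyclicVariance_adjacent h_adjacent h_nested, Finset.mul_sum]
      refine Finset.sum_congr rfl fun i _ => Finset.sum_congr rfl fun j _ => ?_
      ring
    _ ≤ ∑ i, ∑ j, ∑ k, ∑ l, cyclicVariance h i j k l :=
      sum_pairings_le_sum (cyclicVariance_nonneg h) variance_diag
    _ = ∑ i, ∑ j, ∑ k, ∑ l, (h i j k l ^ 2 - cyclicMean h i j k l ^ 2) :=
      (sum_sq_sub_sq_cyclicMean h).symm

end CyclicMean

theorem symmetrization_ineq (n : ℕ) (hn : 1 ≤ n)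
    (h : Fin n → Fin n → Fin n → Fin n → ℝ)
    (hsymm : ∀ i j k l, h i j k l = h j i k l ∧ h i j k l = h i k j l)
    (u : Fin n → Fin n → Fin n → Fin n → ℝ)
    (hu : ∀ i j k l, u i j k l = (h i j k l + h l i j k + h k l i j + h j k l i) / 4) :
    ∑ i, ∑ j, ∑ k, ∑ l, ((h i j k l) ^ 2 - (u i j k l) ^ 2) ≥
      3 / 4 * ∑ i, ∑ j, (h i j i j - h j i j i) ^ 2 := by
  obtain rfl : u = cyclicMean h := by ext i j k l; exact hu i j k l
  exact symmetrization_ineq_general (fun i j => (hsymm i i j j).2) fun i j => (hsymm i j j i).1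
end

section
/- Let p be a real number with 0 < p ≤ 1/52. Then for every real t with 0 < t < 4, (t − 12p)(4 − t)³/(1 + t)² ≤ (6 − 2√6 − 8p)(6 − √6 − 13p)²/(√6 − 1 + 13p). -/
/-!
Each `u > -1` is a critical point of `ξ_c` for a suitable parameter `c = c(u)`, and it is then the
global maximum: `ξ_c(u) - ξ_c(t)` is `(t - u)² / (1 + t)²` times a quadratic in `t` which is a
square plus a nonnegative constant. The relation between `c` and `u` allows `ξ_c(u)` to be written
in a form increasing in `c`, namely `(2 - 2u + 18c)(4 - u)² / (1 + u)`. Since `ξ_p(t)` decreases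
with `p` for `t ≤ 4`, it follows that `ξ_p(t) ≤ (2 - 2u + 18p)(4 - u)² / (1 + u)` whenever
`c(u) ≤ p`. The bound is the case `u = √6 - 2 + 13p`, for which `c(u) ≤ p` amounts to
`p (54 - 20√6 - 91p) ≥ 0`.
-/

/-- The auxiliary function `ξ` of the paper, with its parameter `p` explicit. Division by zero gives
it the value `0` at the pole `t = -1`. -/
noncomputable def xi (p t : ℝ) : ℝ :=
  (t - 12 * p) * (4 - t) ^ 3 / (1 + t) ^ 2

/-- The parameter `p` for which `u` is a critical point of `xi p`, found by solving
`1 / (u - 12 * p) - 3 / (4 - u) - 2 / (1 + u) = 0` (vanishing logarithmic derivative) for `p`. -/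
noncomputable def criticalParam (u : ℝ) : ℝ :=
  (u ^ 2 + 4 * u - 2) / (6 * (11 + u))

section

variable {p t u : ℝ}

theorem xi_antitone_param (ht : t ≤ 4) : Antitone fun p ↦ xi p t := by
  intro p q hpq
  have : 0 ≤ 4 - t := sub_nonneg.2 ht
  simp only [xi]
  gcongr

theorem xi_nonpos_of_four_le (hp : 12 * p ≤ t) (ht : 4 ≤ t) : xi p t ≤ 0 :=
  div_nonpos_of_nonpos_of_nonneg
    (mul_nonpos_of_nonneg_of_nonpos (sub_nonneg.2 hp)
      (Odd.pow_nonpos (by decide) (sub_nonpos.2 ht)))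
    (sq_nonneg _)

theorem xi_criticalParam_self (hu : -1 < u) :
    xi (criticalParam u) u =
      (2 - 2 * u + 18 * criticalParam u) * (4 - u) ^ 2 / (1 + u) := by
  have : 1 + u ≠ 0 := by linarith
  have : 11 + u ≠ 0 := by linarith
  simp only [xi, criticalParam]
  field_simp
  ring

theorem xi_criticalParam_self_sub (hu : -1 < u) (ht : t ≠ -1) :
    xi (criticalParam u) u - xi (criticalParam u) t =
      (t - u) ^ 2 * ((4 - t + 5 * (4 - u) / (11 + u)) ^ 2
        + 250 * (4 - u) ^ 2 / ((1 + u) * (11 + u) ^ 2)) / (1 + t) ^ 2 := by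
  have : 1 + u ≠ 0 := by linarith
  have : 11 + u ≠ 0 := by linarith
  have : 1 + t ≠ 0 := fun h ↦ ht (by linarith)
  simp only [xi, criticalParam]
  field_simp
  ring

theorem xi_criticalParam_le_self (hu : -1 < u) (ht : t ≠ -1) :
    xi (criticalParam u) t ≤ xi (criticalParam u) u := by
  have : 0 < 1 + u := by linarith
  rw [← sub_nonneg, xi_criticalParam_self_sub hu ht]
  positivity

theorem xi_le_of_criticalParam_le (hu : -1 < u) (hup : criticalParam u ≤ p) (ht : t ≠ -1)
    (ht4 : t ≤ 4) : xi p t ≤ (2 - 2 * u + 18 * p) * (4 - u) ^ 2 / (1 + u) := by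
  have : 0 < 1 + u := by linarith
  calc xi p t
    _ ≤ xi (criticalParam u) t := xi_antitone_param ht4 hup
    _ ≤ xi (criticalParam u) u := xi_criticalParam_le_self hu ht
    _ = (2 - 2 * u + 18 * criticalParam u) * (4 - u) ^ 2 / (1 + u) := xi_criticalParam_self hu
    _ ≤ (2 - 2 * u + 18 * p) * (4 - u) ^ 2 / (1 + u) := by gcongr

theorem criticalParam_sqrt_six_le (hp0 : 0 ≤ p) (hp : p ≤ (54 - 20 * √6) / 91) :
    criticalParam (√6 - 2 + 13 * p) ≤ p := by
  have hsq : √6 ^ 2 = 6 := Real.sq_sqrt (by norm_num)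
  have hgap : 0 ≤ p * (54 - 20 * √6 - 91 * p) := mul_nonneg hp0 (by linarith)
  have hden : 0 < 6 * (11 + (√6 - 2 + 13 * p)) := by linarith [Real.sqrt_nonneg 6]
  rw [criticalParam, div_le_iff₀ hden]
  linarith

theorem xi_bound_general (hp0 : 0 ≤ p) (hp : p ≤ (54 - 20 * √6) / 91) (ht : t ≠ -1) :
    (t - 12 * p) * (4 - t) ^ 3 / (1 + t) ^ 2 ≤
      (6 - 2 * √6 - 8 * p) * (6 - √6 - 13 * p) ^ 2 / (√6 - 1 + 13 * p) := by
  have hsqrt : 2 ≤ √6 := Real.le_sqrt_of_sq_le (by norm_num)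
  have bound_of_le_four {s : ℝ} (hs : s ≠ -1) (hs4 : s ≤ 4) :
      xi p s ≤ (6 - 2 * √6 - 8 * p) * (6 - √6 - 13 * p) ^ 2 / (√6 - 1 + 13 * p) := by
    convert xi_le_of_criticalParam_le (by linarith) (criticalParam_sqrt_six_le hp0 hp) hs hs4
      using 2 <;> ring
  rcases le_total t 4 with ht4 | ht4
  · exact bound_of_le_four ht ht4
  · calc xi p t
      _ ≤ 0 := xi_nonpos_of_four_le (by linarith) ht4
      _ = xi p 4 := by simp [xi]
      _ ≤ _ := bound_of_le_four (by norm_num) le_rfl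

end

theorem xi_bound (p : ℝ) (hp1 : 0 < p) (hp2 : p ≤ 1 / 52) (t : ℝ) (ht1 : 0 < t) (ht2 : t < 4) :
    (t - 12 * p) * (4 - t) ^ 3 / (1 + t) ^ 2 ≤
      (6 - 2 * Real.sqrt 6 - 8 * p) * (6 - Real.sqrt 6 - 13 * p) ^ 2 /
        (Real.sqrt 6 - 1 + 13 * p) := by
  have hsqrt : √6 ≤ 5 / 2 := Real.sqrt_le_iff.2 (by norm_num)
  exact xi_bound_general hp1.le (by linarith) (by linarith)
end

section
/- Let n ≥ 2 be an integer, let H ≥ 0 be a real number, and let λ be a real number satisfying λ² + (nH − λ)²/(n−1) ≤ 16n/15. Then (15/(16(n−1))) λ² ≤ 1 + (√(15n)/(2(n−1))) H. -/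
/-!
Multiplying by `(n - 1) / n` turns the bound `l ^ 2 + (n * H - l) ^ 2 / (n - 1) ≤ c * n` into
`l ^ 2 - 2 * H * l + n * H ^ 2 ≤ c * (n - 1)`. The only term that works against a bound on `l ^ 2`
is `2 * H * l`, and for `H ≥ 0` it is at most `2 * H * √(c * n)`, because the original bound
already gives `l ^ 2 ≤ c * n`. The theorem is the case `c = 16 / 15`.
-/

theorem sq_add_sq_sub_div_sub_one {K : Type*} [Field K] {n : K} (hn : n ≠ 1) (H l : K) :
    l ^ 2 + (n * H - l) ^ 2 / (n - 1) = n * (l ^ 2 - 2 * H * l + n * H ^ 2) / (n - 1) := by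
  have hn' : n - 1 ≠ 0 := sub_ne_zero.mpr hn
  field_simp
  ring

theorem sq_add_sq_sub_div_sub_one_le_iff {K : Type*} [Field K] [LinearOrder K]
    [IsStrictOrderedRing K] {n c H l : K} (hn : 1 < n) :
    l ^ 2 + (n * H - l) ^ 2 / (n - 1) ≤ c * n ↔
      l ^ 2 - 2 * H * l + n * H ^ 2 ≤ c * (n - 1) := by
  have hn0 : 0 < n := one_pos.trans hn
  rw [sq_add_sq_sub_div_sub_one hn.ne', div_le_iff₀ (sub_pos.mpr hn), mul_comm c n, mul_assoc n,
    mul_le_mul_iff_right₀ hn0]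

theorem sq_le_of_sq_add_sq_sub_div_sub_one_le {n c H l : ℝ} (hn : 1 < n) (hH : 0 ≤ H)
    (hl : l ^ 2 + (n * H - l) ^ 2 / (n - 1) ≤ c * n) :
    l ^ 2 ≤ c * (n - 1) + 2 * H * √(c * n) := by
  have hrest : 0 ≤ (n * H - l) ^ 2 / (n - 1) := div_nonneg (sq_nonneg _) (sub_pos.mpr hn).le
  have hl_le : l ≤ √(c * n) := Real.le_sqrt_of_sq_le ((le_add_of_nonneg_right hrest).trans hl)
  calc
    l ^ 2 ≤ l ^ 2 + n * H ^ 2 := le_add_of_nonneg_right (by positivity)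
    _ ≤ c * (n - 1) + 2 * H * l := by linarith [(sq_add_sq_sub_div_sub_one_le_iff hn).mp hl]
    _ ≤ c * (n - 1) + 2 * H * √(c * n) := by gcongr

theorem ineq_313_general {n H l : ℝ} (hn : 1 < n) (hH : 0 ≤ H)
    (hl : l ^ 2 + (n * H - l) ^ 2 / (n - 1) ≤ 16 * n / 15) :
    15 / (16 * (n - 1)) * l ^ 2 ≤ 1 + √(15 * n) / (2 * (n - 1)) * H := by
  have hn1 : 0 < n - 1 := sub_pos.mpr hn
  have hsqrt : √(16 / 15 * n) = 4 / 15 * √(15 * n) := by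
    rw [show 16 / 15 * n = (4 / 15) ^ 2 * (15 * n) by ring, Real.sqrt_mul (by positivity),
      Real.sqrt_sq (by norm_num)]
  have hsq : l ^ 2 ≤ 16 / 15 * (n - 1) + 2 * H * √(16 / 15 * n) :=
    sq_le_of_sq_add_sq_sub_div_sub_one_le hn hH (hl.trans_eq (by ring))
  calc
    15 / (16 * (n - 1)) * l ^ 2
      ≤ 15 / (16 * (n - 1)) * (16 / 15 * (n - 1) + 2 * H * √(16 / 15 * n)) := by gcongr
    _ = 1 + √(15 * n) / (2 * (n - 1)) * H := by
      rw [hsqrt]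
      field_simp
      ring

theorem ineq_313 (n : ℕ) (hn : 2 ≤ n) (H : ℝ) (hH : 0 ≤ H) (l : ℝ)
    (hl : l ^ 2 + (n * H - l) ^ 2 / ((n : ℝ) - 1) ≤ 16 * n / 15) :
    15 / (16 * ((n : ℝ) - 1)) * l ^ 2 ≤ 1 + Real.sqrt (15 * n) / (2 * ((n : ℝ) - 1)) * H :=
  ineq_313_general (Nat.one_lt_cast.mpr hn) hH hl
end

section
/- Let n ≥ 75 be an integer and set σ = (√17 + 1)/2. Then −0.43n + 0.571 + 1.1186·√((n/46)·(σn + n + 5n/23)) + (2.355 − 3/(2(n+4)))·(n/23) < 0. -/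
/-!
The square root is homogeneous of degree one, so the left-hand side is
`0.571 - c * x - 3 / 46 * (x / (x + 4))` with `c ≈ 0.00699`. Both subtracted terms increase with
`x`, so it suffices to look at `x = 73`, where they exceed `0.5098` and `0.0618`.
-/

theorem sqrt_mul_linear_eq_sqrt_mul {x : ℝ} (hx : 0 ≤ x) (a b c s : ℝ) :
    √(x / a * (s * x + x + b * x / c)) = √((s + 1 + b / c) / a) * x := by
  calc √(x / a * (s * x + x + b * x / c))
      = √((s + 1 + b / c) / a * x ^ 2) := by ring_nf
    _ = √((s + 1 + b / c) / a) * x := by rw [Real.sqrt_mul' _ (sq_nonneg x), Real.sqrt_sq hx]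

theorem sqrt_seventeen_lt : √(17 : ℝ) < 4.1232 := by
  rw [Real.sqrt_lt' (by norm_num)]
  norm_num

theorem sqrt_leading_coeff_lt : √(((√17 + 1) / 2 + 1 + 5 / 23) / 46) < 0.28663 := by
  rw [Real.sqrt_lt' (by norm_num)]
  linarith [sqrt_seventeen_lt]

theorem div_self_add_le_div_self_add {a x y : ℝ} (ha : 0 ≤ a) (hxa : 0 < x + a) (hxy : x ≤ y) :
    x / (x + a) ≤ y / (y + a) := by
  rw [div_le_div_iff₀ hxa (by linarith)]
  linarith [mul_le_mul_of_nonneg_right hxy ha]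

theorem numeric_high_dim_general {x : ℝ} (hx : 73 ≤ x) :
    -0.43 * x + 0.571 +
      1.1186 * √(x / 46 * ((√17 + 1) / 2 * x + x + 5 * x / 23)) +
      (2.355 - 3 / (2 * (x + 4))) * (x / 23) < 0 := by
  have hx₀ : 0 < x := by linarith
  have sqrt_lt : √(x / 46 * ((√17 + 1) / 2 * x + x + 5 * x / 23)) < 0.28663 * x := by
    rw [sqrt_mul_linear_eq_sqrt_mul hx₀.le]
    exact mul_lt_mul_of_pos_right sqrt_leading_coeff_lt hx₀
  have fraction_ge : 73 / (73 + 4) ≤ x / (x + 4) :=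
    div_self_add_le_div_self_add (by norm_num) (by norm_num) hx
  have last_term_eq : (2.355 - 3 / (2 * (x + 4))) * (x / 23)
      = 2.355 / 23 * x - 3 / 46 * (x / (x + 4)) := by rw [← div_div]; ring
  rw [last_term_eq]
  linarith

theorem numeric_high_dim (n : ℕ) (hn : 75 ≤ n) :
    -0.43 * (n : ℝ) + 0.571 +
      1.1186 * Real.sqrt ((n : ℝ) / 46 * ((Real.sqrt 17 + 1) / 2 * n + n + 5 * n / 23)) +
      (2.355 - 3 / (2 * ((n : ℝ) + 4))) * ((n : ℝ) / 23) < 0 :=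
  numeric_high_dim_general (by exact_mod_cast le_trans (by norm_num) hn)
end

section
/- Let n ∈ {4, 5}, set η = 0.16 if n = 4 and η = 0.23 if n = 5, and let t be a real number with 2 ≤ t ≤ (1+√17)/2. Set r = (16t − 8 − 12√(−2t² + 2t + 8))/17. Then for every real number z, (t − 2 − η) + ((t − r − 2 − η)/(n−2))·(1 + z)² − (t − 2 + (2+η)/3)·z² ≤ 0. -/
/-!
Write `K = a + b (1 + z)² - c z²`. When `b < c`, the maximum of `K` over `z` is `a + b c / (c - b)`,
so `K ≤ 0` for all `z` as soon as `a c + b (c - a) ≤ 0`; here `c - a` does not depend on `t`.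
The only nonpolynomial term of `b` is a positive multiple of the square root in `r`, and replacing
that square root by its tangent `√x ≤ (x + m²) / (2 m)` bounds `a c + b (c - a)` by a quadratic
polynomial in `t`. This polynomial is convex, so its sign is checked at the ends of the interval.
The choices `m = 1` for `n = 4` and `m = 3 / 4` for `n = 5` make both end values nonpositive.
Since `K` is decreasing in `η`, only the smallest `η` matters.
-/

open Set

/-- The function `K(n, t, z)` of the paper, with `n` real and with `η` and `r` as parameters. -/
noncomputable def K (n η r t z : ℝ) : ℝ :=
  (t - 2 - η) + (t - r - 2 - η) / (n - 2) * (1 + z) ^ 2 - (t - 2 + (2 + η) / 3) * z ^ 2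

/-- The paper's `r`: the smaller root of `17 r² - 16 (2 t - 1) r + 32 (t² - t - 2)`. -/
noncomputable def lowerRoot (t : ℝ) : ℝ :=
  (16 * t - 8 - 12 * √(-2 * t ^ 2 + 2 * t + 8)) / 17

/-- The expression `a c + b (c - a)` for the coefficients `a`, `b`, `c` of `K n η (lowerRoot t) t`,
with the square root in `lowerRoot t` replaced by its tangent at `m ^ 2`. -/
noncomputable def discrMajorant (n η m t : ℝ) : ℝ :=
  (t - 2 - η) * (t - 2 + (2 + η) / 3) +
    ((t + 8 + 12 * ((-2 * t ^ 2 + 2 * t + 8 + m ^ 2) / (2 * m))) / 17 - 2 - η) / (n - 2) *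
      ((2 + 4 * η) / 3)

theorem add_mul_one_add_sq_sub_mul_sq_nonpos {𝕜 : Type*} [Field 𝕜] [LinearOrder 𝕜]
    [IsStrictOrderedRing 𝕜] {a b c : 𝕜} (hbc : b < c) (h : a * c + b * (c - a) ≤ 0) (z : 𝕜) :
    a + b * (1 + z) ^ 2 - c * z ^ 2 ≤ 0 := by
  have complete_square : (c - b) * (a + b * (1 + z) ^ 2 - c * z ^ 2) =
      a * c + b * (c - a) - ((c - b) * z - b) ^ 2 := by ring
  refine nonpos_of_mul_nonpos_right ?_ (sub_pos.mpr hbc)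
  rw [complete_square]
  exact sub_nonpos.mpr (h.trans (sq_nonneg _))

theorem sqrt_le_add_sq_div {x m : ℝ} (hx : 0 ≤ x) (hm : 0 < m) :
    √x ≤ (x + m ^ 2) / (2 * m) := by
  rw [le_div_iff₀ (by positivity)]
  calc √x * (2 * m) = 2 * √x * m := by ring
    _ ≤ √x ^ 2 + m ^ 2 := two_mul_le_add_sq _ _
    _ = x + m ^ 2 := by rw [Real.sq_sqrt hx]

theorem convexOn_quadratic_s18 {A : ℝ} (hA : 0 ≤ A) (B C : ℝ) :
    ConvexOn ℝ univ fun x ↦ A * x ^ 2 + B * x + C :=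
  ((even_two.convexOn_pow.smul hA).add
    ((LinearMap.mulLeft ℝ B).convexOn convex_univ)).add_const C

theorem antitone_K {n : ℝ} (hn : 2 ≤ n) (r t z : ℝ) : Antitone fun η ↦ K n η r t z := by
  intro η η' h
  have : 0 ≤ n - 2 := sub_nonneg.mpr hn
  simp only [K]
  gcongr

theorem convexOn_discrMajorant {n η m : ℝ} (hn : 2 < n) (hm : 0 < m)
    (h : 8 * (1 + 2 * η) ≤ 17 * (n - 2) * m) : ConvexOn ℝ univ (discrMajorant n η m) := by
  have : 0 < n - 2 := sub_pos.mpr hn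
  have leading_coeff_nonneg : 0 ≤ 1 - 8 * (1 + 2 * η) / (17 * (n - 2) * m) :=
    sub_nonneg.mpr (div_le_one_of_le₀ h (by positivity))
  convert convexOn_quadratic_s18 leading_coeff_nonneg
    (-4 + 2 * (1 - η) / 3 + (2 + 4 * η) * (m + 12) / (51 * (n - 2) * m))
    (discrMajorant n η m 0) using 1
  funext t
  simp only [discrMajorant]
  field_simp
  ring

section LowerRoot

variable {n η t : ℝ}

theorem two_mul_sub_two_le_lowerRoot (ht : 0 ≤ -2 * t ^ 2 + 2 * t + 8) :
    2 * (t - 2) ≤ lowerRoot t := by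
  have hsqrt := sqrt_le_add_sq_div ht zero_lt_two
  rw [lowerRoot]
  linarith [sq_nonneg (t - 2)]

theorem discr_le_discrMajorant {m : ℝ} (hn : 2 < n) (hη : 0 ≤ η) (hm : 0 < m)
    (ht : 0 ≤ -2 * t ^ 2 + 2 * t + 8) :
    (t - 2 - η) * (t - 2 + (2 + η) / 3) + (t - lowerRoot t - 2 - η) / (n - 2) *
      (t - 2 + (2 + η) / 3 - (t - 2 - η)) ≤ discrMajorant n η m t := by
  have : 0 < n - 2 := sub_pos.mpr hn
  have sub_lowerRoot : t - lowerRoot t = (t + 8 + 12 * √(-2 * t ^ 2 + 2 * t + 8)) / 17 := by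
    rw [lowerRoot]
    ring
  have sub_coeff : t - 2 + (2 + η) / 3 - (t - 2 - η) = (2 + 4 * η) / 3 := by ring
  rw [sub_lowerRoot, sub_coeff, discrMajorant]
  gcongr
  exact sqrt_le_add_sq_div ht hm

theorem K_lowerRoot_nonpos (hn : 2 < n) (hη : 0 ≤ η) {m : ℝ} (hm : 0 < m) (ht : 2 ≤ t)
    (ht' : 0 ≤ -2 * t ^ 2 + 2 * t + 8) (h : discrMajorant n η m t ≤ 0) (z : ℝ) :
    K n η (lowerRoot t) t z ≤ 0 := by
  have coeff_nonpos : (t - lowerRoot t - 2 - η) / (n - 2) ≤ 0 :=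
    div_nonpos_of_nonpos_of_nonneg (by linarith [two_mul_sub_two_le_lowerRoot ht'])
      (sub_nonneg.mpr hn.le)
  have coeff_pos : 0 < t - 2 + (2 + η) / 3 := by linarith
  exact add_mul_one_add_sq_sub_mul_sq_nonpos (coeff_nonpos.trans_lt coeff_pos)
    ((discr_le_discrMajorant hn hη hm ht').trans h) z

theorem K_lowerRoot_nonpos_of_endpoints (hn : 2 < n) (hη : 0 ≤ η) {m t₁ : ℝ} (hm : 0 < m)
    (hconvex : 8 * (1 + 2 * η) ≤ 17 * (n - 2) * m)
    (h₂ : discrMajorant n η m 2 ≤ 0) (h₁ : discrMajorant n η m t₁ ≤ 0)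
    (ht : t ∈ Icc 2 t₁) (ht' : 0 ≤ -2 * t ^ 2 + 2 * t + 8) (z : ℝ) :
    K n η (lowerRoot t) t z ≤ 0 := by
  have le_max_endpoints := (convexOn_discrMajorant hn hm hconvex).le_max_of_mem_Icc
    (mem_univ 2) (mem_univ t₁) ht
  exact K_lowerRoot_nonpos hn hη hm ht.1 ht' (le_max_endpoints.trans (max_le h₂ h₁)) z

end LowerRoot

theorem radicand_nonneg {t : ℝ} (ht : t ∈ Icc 2 ((1 + √17) / 2)) :
    0 ≤ -2 * t ^ 2 + 2 * t + 8 := by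
  have factorization : -2 * t ^ 2 + 2 * t + 8 =
      2 * ((1 + √17) / 2 - t) * (t - (1 - √17) / 2) := by
    linear_combination (-1 / 2) * Real.sq_sqrt (show (0 : ℝ) ≤ 17 by norm_num)
  rw [factorization]
  have upper : 0 ≤ (1 + √17) / 2 - t := sub_nonneg.mpr ht.2
  have lower : 0 ≤ t - (1 - √17) / 2 := by linarith [ht.1, Real.sqrt_nonneg 17]
  exact mul_nonneg (mul_nonneg zero_le_two upper) lower

theorem one_add_sqrt_seventeen_div_two_le : (1 + √17) / 2 ≤ 2.562 := by
  have : √17 ≤ 4.124 := Real.sqrt_le_iff.mpr (by norm_num)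
  linarith

theorem K_nonpos_general (n : ℕ) (hn : n = 4 ∨ n = 5) (η : ℝ)
    (hη : (if n = 4 then 0.16 else 0.23) ≤ η)
    (t : ℝ) (ht1 : 2 ≤ t) (ht2 : t ≤ (1 + Real.sqrt 17) / 2)
    (r : ℝ) (hr : r = (16 * t - 8 - 12 * Real.sqrt (-2 * t ^ 2 + 2 * t + 8)) / 17)
    (z : ℝ) :
    (t - 2 - η) + (t - r - 2 - η) / ((n : ℝ) - 2) * (1 + z) ^ 2 -
      (t - 2 + (2 + η) / 3) * z ^ 2 ≤ 0 := by
  have ht : t ∈ Icc 2 2.562 := ⟨ht1, ht2.trans one_add_sqrt_seventeen_div_two_le⟩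
  have ht' := radicand_nonneg ⟨ht1, ht2⟩
  have hn2 : (2 : ℝ) < n := by rcases hn with rfl | rfl <;> norm_num
  obtain rfl : r = lowerRoot t := hr
  refine (antitone_K hn2.le (lowerRoot t) t z hη).trans ?_
  rcases hn with rfl | rfl
  · apply K_lowerRoot_nonpos_of_endpoints (m := 1) hn2 (ht := ht) (ht' := ht') <;>
      norm_num [discrMajorant]
  · apply K_lowerRoot_nonpos_of_endpoints (m := 3 / 4) hn2 (ht := ht) (ht' := ht') <;>
      norm_num [discrMajorant]

theorem K_nonpos (n : ℕ) (hn : n = 4 ∨ n = 5) (η : ℝ)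
    (hη : η = if n = 4 then 0.16 else 0.23)
    (t : ℝ) (ht1 : 2 ≤ t) (ht2 : t ≤ (1 + Real.sqrt 17) / 2)
    (r : ℝ) (hr : r = (16 * t - 8 - 12 * Real.sqrt (-2 * t ^ 2 + 2 * t + 8)) / 17)
    (z : ℝ) :
    (t - 2 - η) + (t - r - 2 - η) / ((n : ℝ) - 2) * (1 + z) ^ 2 -
      (t - 2 + (2 + η) / 3) * z ^ 2 ≤ 0 :=
  K_nonpos_general n hn η hη.ge t ht1 ht2 r hr z
end

section
/- Let n ≥ 6 be an integer, set ε = √((15n−16)/(5n−16)) − 1 and p = 1/(13(n−2)). Then (8(n−1)/(16n−1))·(2 + 3/ε) ≤ 2·((3 − √6 − 4p)/(√6 − 1 + 13p))·(6 − √6 − 13p)². -/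
/-!
Rationalizing the denominator turns `3 / ε` into an expression in `√((15x - 16)(5x - 16))`, which
weighted AM-GM bounds by a polynomial; the weight is chosen so that equality holds where `ε = 2`.
Both sides of the comparison are then separated by the rational function `4 (x - 2) / (x + 2)`,
which in terms of `p = 1 / (13 (x - 2))` is `4 / (1 + 52 p)`.
-/

/-- The constant `ε` of the paper, with the integer `n` replaced by a real variable. -/
noncomputable def epsilon (x : ℝ) : ℝ :=
  √((15 * x - 16) / (5 * x - 16)) - 1

/-- The cube of the paper's constant `C_3'(n)`, with `n` replaced by a real variable. -/
noncomputable def C3PrimeCubed (x : ℝ) : ℝ :=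
  8 * (x - 1) / (16 * x - 1) * (2 + 3 / epsilon x)

/-- The cube of the paper's constant `C_3(n)`, as a function of `p = 1 / (13 (n - 2))`. -/
noncomputable def C3Cubed (p : ℝ) : ℝ :=
  (3 - √6 - 4 * p) / (√6 - 1 + 13 * p) * (6 - √6 - 13 * p) ^ 2

theorem inv_sqrt_div_sub_one {a b : ℝ} (ha : 0 ≤ a) (hb : 0 < b) (hab : a ≠ b) :
    (√(a / b) - 1)⁻¹ = (√(a * b) + b) / (a - b) := by
  have hr : √(a / b) ≠ 1 := by rwa [ne_eq, Real.sqrt_eq_one, div_eq_one_iff_eq hb.ne']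
  have hsq : √(a / b) ^ 2 * b = a := by
    rw [Real.sq_sqrt (by positivity), div_mul_cancel₀ a hb.ne']
  have hmul : √(a * b) = √(a / b) * b := by
    rw [show a * b = a / b * b ^ 2 by field_simp, Real.sqrt_mul (by positivity),
      Real.sqrt_sq hb.le]
  rw [hmul, inv_eq_one_div, div_eq_div_iff (sub_ne_zero.2 hr) (sub_ne_zero.2 hab)]
  linear_combination -hsq

theorem sqrt_mul_le_weighted_add {a b c : ℝ} (ha : 0 ≤ a) (hb : 0 ≤ b) (hc : 0 < c) :
    √(a * b) ≤ (a + c ^ 2 * b) / (2 * c) := by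
  refine Real.sqrt_le_iff.2 ⟨by positivity, ?_⟩
  rw [div_pow, le_div_iff₀ (by positivity)]
  linarith [sq_nonneg (a - c ^ 2 * b)]

theorem epsilon_pos {x : ℝ} (hx : 16 / 5 < x) : 0 < epsilon x := by
  refine sub_pos.2 (Real.lt_sqrt_of_sq_lt ?_)
  rw [one_pow, one_lt_div] <;> linarith

theorem three_div_epsilon_le {x : ℝ} (hx : 16 / 5 < x) :
    3 / epsilon x ≤ (45 * x - 128) / (10 * x) := by
  have ha : 0 < 15 * x - 16 := by linarith
  have hb : 0 < 5 * x - 16 := by linarith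
  have amgm := sqrt_mul_le_weighted_add ha.le hb.le (c := 3) (by norm_num)
  calc 3 / epsilon x
      = 3 * (√((15 * x - 16) * (5 * x - 16)) + (5 * x - 16)) / (10 * x) := by
        rw [div_eq_mul_inv, epsilon, inv_sqrt_div_sub_one ha.le hb (by linarith), mul_div_assoc']
        congr 1
        ring
    _ ≤ (45 * x - 128) / (10 * x) := by
        have : 0 < x := by linarith
        gcongr
        linarith

theorem C3PrimeCubed_nonneg {x : ℝ} (hx : 16 / 5 < x) : 0 ≤ C3PrimeCubed x := by
  have hε := epsilon_pos hx
  have hcoeff : 0 ≤ 8 * (x - 1) / (16 * x - 1) := div_nonneg (by linarith) (by linarith)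
  unfold C3PrimeCubed
  positivity

theorem C3PrimeCubed_le {x : ℝ} (hx : 16 / 5 < x) :
    C3PrimeCubed x ≤ 4 * (x - 2) / (x + 2) := by
  have hcoeff : 0 ≤ 8 * (x - 1) / (16 * x - 1) := div_nonneg (by linarith) (by linarith)
  have hcubic : 0 ≤ 3 * x ^ 3 - 20.4 * x ^ 2 + 53.6 * x - 51.2 := by
    nlinarith [mul_nonneg (sub_pos.2 hx).le (sq_nonneg (x - 9 / 5))]
  have hden : 0 < 16 * x - 1 := by linarith
  have : 0 < x := by linarith
  calc C3PrimeCubed x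
      ≤ 8 * (x - 1) / (16 * x - 1) * (2 + (45 * x - 128) / (10 * x)) := by
        refine mul_le_mul_of_nonneg_left ?_ hcoeff
        linarith [three_div_epsilon_le hx]
    _ = 8 * (x - 1) * (65 * x - 128) / ((16 * x - 1) * (10 * x)) := by
        field_simp
        ring
    _ ≤ 4 * (x - 2) / (x + 2) := by
        rw [div_le_div_iff₀ (by positivity) (by positivity)]
        linarith

theorem le_C3Cubed {p : ℝ} (hp₀ : 0 ≤ p) (hp : p ≤ 5 / 78) :
    4 / (1 + 52 * p) ≤ C3Cubed p := by
  have hlow : 1 < √6 := Real.lt_sqrt_of_sq_lt (by norm_num)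
  have hupp : √6 ≤ 2.45 := Real.sqrt_le_iff.2 (by norm_num)
  -- Right minus left is a quartic in `p`, concave on `[0, 5 / 78]` and positive at both endpoints.
  have hquartic :
      4 * (2.45 - 1 + 13 * p) ≤ (3 - 2.45 - 4 * p) * (6 - 2.45 - 13 * p) ^ 2 * (1 + 52 * p) := by
    have hbump : 0 ≤ p * (5 / 78 - p) := mul_nonneg hp₀ (sub_nonneg.2 hp)
    linarith [mul_nonneg hbump (sub_nonneg.2 hp), mul_nonneg hbump (sq_nonneg p)]
  calc 4 / (1 + 52 * p)
      ≤ (3 - 2.45 - 4 * p) * (6 - 2.45 - 13 * p) ^ 2 / (2.45 - 1 + 13 * p) := by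
        rwa [div_le_div_iff₀ (by positivity) (by linarith)]
    _ = (3 - 2.45 - 4 * p) / (2.45 - 1 + 13 * p) * (6 - 2.45 - 13 * p) ^ 2 :=
        mul_div_right_comm _ _ _
    _ ≤ C3Cubed p := by
        have hnum : 0 ≤ 3 - √6 - 4 * p := by linarith
        have : 0 < √6 - 1 + 13 * p := by linarith
        have hbase : 0 ≤ 6 - 2.45 - 13 * p := by linarith
        unfold C3Cubed
        gcongr

theorem C3_compare_general {x : ℝ} (hx : 16 / 5 < x) :
    C3PrimeCubed x ≤ C3Cubed (1 / (13 * (x - 2))) := by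
  have hx2 : 0 < x - 2 := by linarith
  have hp : 1 / (13 * (x - 2)) ≤ 5 / 78 := by
    rw [div_le_div_iff₀ (by positivity) (by norm_num)]
    linarith
  calc C3PrimeCubed x
      ≤ 4 * (x - 2) / (x + 2) := C3PrimeCubed_le hx
    _ = 4 / (1 + 52 * (1 / (13 * (x - 2)))) := by
        have : x + 2 ≠ 0 := by linarith
        field_simp
        ring
    _ ≤ C3Cubed (1 / (13 * (x - 2))) := le_C3Cubed (by positivity) hp

theorem C3_compare (n : ℕ) (hn : 6 ≤ n) :
    8 * ((n : ℝ) - 1) / (16 * n - 1) *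
        (2 + 3 / (Real.sqrt ((15 * n - 16) / (5 * n - 16)) - 1)) ≤
      2 * ((3 - Real.sqrt 6 - 4 * (1 / (13 * ((n : ℝ) - 2)))) /
          (Real.sqrt 6 - 1 + 13 * (1 / (13 * ((n : ℝ) - 2))))) *
        (6 - Real.sqrt 6 - 13 * (1 / (13 * ((n : ℝ) - 2)))) ^ 2 := by
  have hx : (16 / 5 : ℝ) < n := by
    have : (6 : ℝ) ≤ n := by exact_mod_cast hn
    linarith
  calc C3PrimeCubed n
      ≤ 2 * C3Cubed (1 / (13 * (n - 2))) := by
        linarith [C3PrimeCubed_nonneg hx, C3_compare_general hx]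
    _ = _ := (mul_assoc _ _ _).symm
end
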